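/- arXiv:math/0608762 — 2 statements merged into one kernel-verified Lean document; each statement's English description precedes it below -/
import Mathlib

section
/- The map (a⊗b)g ↦ ag ⊗ (^{g^{-1}}b)g^{-1} (for a, b ∈ A and g ∈ G) is an isomorphism of k-algebras from the smash product A^e # kG, where G acts diagonally on A^e = A ⊗ A^op by ^g(a⊗b) = ^g a ⊗ ^g b, onto the subalgebra ⊕_{g∈G} (Ag ⊗ Ag^{-1}) of B^e = B ⊗ B^op. -/
/- STATEMENT 2:
The map `(a⊗b)g ↦ ag ⊗ (^{g⁻¹}b)g⁻¹` is an isomorphism of `k`-algebras from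
the smash product `Aᵉ # kG` (with `G` acting diagonally on `Aᵉ = A ⊗ Aᵒᵖ`)
onto the subalgebra `⊕_{g ∈ G} (Ag ⊗ Ag⁻¹)` of `Bᵉ = B ⊗ Bᵒᵖ`. -/

open TensorProduct MulOpposite Polynomial CategoryTheory

noncomputable section

variable (k : Type) [Field k]
variable (G : Type) [Group G] [Fintype G]
variable (χ : G →* kˣ)
variable (n : ℕ)

/-- `A = k[x]/(xⁿ)`. -/
abbrev AA : Type := Polynomial k ⧸ Ideal.span {(Polynomial.X : Polynomial k) ^ n}

/-- The class of `x` in `A = k[x]/(xⁿ)`. -/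
def xA : AA k n := Ideal.Quotient.mk _ Polynomial.X

variable (σ : G →* (AA k n ≃ₐ[k] AA k n))
variable (B : Type) [Ring B] [Algebra k B]
variable (ιA : AA k n →ₐ[k] B) (ιG : G →* Bˣ)

/-- The map `G →₀ A → B`, `∑ aₘ·g ↦ ∑ ιA(aₘ)·ιG(g)`; bijectivity says that
`B` is free as a left `A`-module with basis `G`, i.e. `B = A ⊗ kG` as a vector
space. -/
def skewCombine : (G →₀ AA k n) →ₗ[k] B :=
  Finsupp.lsum k fun g : G =>
    (LinearMap.mulRight k ((ιG g : Bˣ) : B)).comp ιA.toLinearMap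

/-- `B` is the skew group algebra (smash product) `A # kG` for the action `σ`
of `G` on `A = k[x]/(xⁿ)` determined by `σ g x = χ(g)·x`. -/
structure IsSkewGroupAlgebra : Prop where
  action_x : ∀ g : G, σ g (xA k n) = (χ g : k) • xA k n
  comm : ∀ (g : G) (a : AA k n), ((ιG g : Bˣ) : B) * ιA a = ιA (σ g a) * ((ιG g : Bˣ) : B)
  bijective : Function.Bijective (skewCombine k G n B ιA ιG)


/-- `Aᵉ = A ⊗ₖ Aᵒᵖ`. -/
abbrev Ae : Type := AA k n ⊗[k] (AA k n)ᵐᵒᵖ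

/-- The subspace `⊕_{g ∈ G} (Ag ⊗ Ag⁻¹)` of `Bᵉ = B ⊗ Bᵒᵖ`. -/
def DD : Submodule k (B ⊗[k] Bᵐᵒᵖ) :=
  Submodule.span k
    {z | ∃ (a b : AA k n) (g : G),
      z = (ιA a * ((ιG g : Bˣ) : B)) ⊗ₜ[k] op (ιA b * ((ιG g⁻¹ : Bˣ) : B))}

variable (C : Type) [Ring C] [Algebra k C]
variable (ιAe : Ae k n →ₐ[k] C) (ιG' : G →* Cˣ)

/-- The map `G →₀ Aᵉ → C`; its bijectivity says `C = Aᵉ ⊗ kG` as a vector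
space. -/
def skewCombine' : (G →₀ Ae k n) →ₗ[k] C :=
  Finsupp.lsum k fun g : G =>
    (LinearMap.mulRight k ((ιG' g : Cˣ) : C)).comp ιAe.toLinearMap

/-- `C` is the smash product `Aᵉ # kG` for the diagonal action of `G` on
`Aᵉ = A ⊗ Aᵒᵖ`, `^g(a ⊗ b) = ^g a ⊗ ^g b`. -/
structure IsDiagSkewGroupAlgebra : Prop where
  comm : ∀ (g : G) (a b : AA k n),
    ((ιG' g : Cˣ) : C) * ιAe (a ⊗ₜ[k] op b) =
      ιAe (σ g a ⊗ₜ[k] op (σ g b)) * ((ιG' g : Cˣ) : C)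
  bijective : Function.Bijective (skewCombine' k G n C ιAe ιG')

/-!
A smash product `A # H` is universal for covariant pairs, so an algebra map out of `Aᵉ # H` is
given by `ι ⊗ ιᵒᵖ : Aᵉ → Bᵉ` and `h ↦ h ⊗ h⁻¹`. These two form a covariant pair because
`h⁻¹ · ʰb = b · h⁻¹` in `B`, and the same identity turns `(a ⊗ b)h` into `ah ⊗ (^{h⁻¹}b)h⁻¹`.
Injectivity is seen by extracting, for each `h`, the coefficient of `h` in the first tensor factor
and that of `h⁻¹` in the second.
-/

section SmashProduct

variable {R A S T M H : Type*} [CommSemiring R] [Semiring A] [Algebra R A] [Semiring S]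
  [Algebra R S] [Semiring T] [Algebra R T] [AddCommMonoid M] [Module R M] [Monoid H]

/-- `(φ, v)` is a covariant pair for the action `α` of `H` on `A`: the images of `A` and `H` in `T`
commute past each other as they do in `A # H`. -/
def IsCovariantPair (α : H →* (A →ₐ[R] A)) (φ : A →ₐ[R] T) (v : H →* T) : Prop :=
  ∀ h a, v h * φ a = φ (α h a) * v h

/-- The linear map `∑ aₕ h ↦ ∑ φ(aₕ) v(h)` on `A ⊗ RH`, realised as `H →₀ A`. -/
def smashMap (φ : A →ₐ[R] T) (v : H →* T) : (H →₀ A) →ₗ[R] T :=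
  Finsupp.lsum R fun h => LinearMap.mulRight R (v h) ∘ₗ φ.toLinearMap

/-- `S`, with the maps `ι` and `u`, is a smash product `A # H`. The action is a homomorphism `α`
rather than a `MulSemiringAction` instance, because on `A ⊗ Aᵐᵒᵖ` an instance for the diagonal
action would clash with the action on the left factor. -/
structure IsSmashProduct (α : H →* (A →ₐ[R] A)) (ι : A →ₐ[R] S) (u : H →* S) : Prop where
  covariant : IsCovariantPair α ι u
  bijective : Function.Bijective (smashMap ι u)

@[simp]
theorem smashMap_single (φ : A →ₐ[R] T) (v : H →* T) (h : H) (a : A) :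
    smashMap φ v (Finsupp.single h a) = φ a * v h := by
  simp [smashMap]

theorem range_smashMap (φ : A →ₐ[R] T) (v : H →* T) :
    LinearMap.range (smashMap φ v) = Submodule.span R {z | ∃ a h, z = φ a * v h} := by
  refine le_antisymm ?_ (Submodule.span_le.2 ?_)
  · rintro _ ⟨s, rfl⟩
    induction s using Finsupp.induction_linear with
    | zero => simp
    | add s t hs ht => rw [map_add]; exact add_mem hs ht
    | single h a => exact Submodule.subset_span ⟨a, h, smashMap_single φ v h a⟩
  · rintro _ ⟨a, h, rfl⟩
    exact ⟨Finsupp.single h a, smashMap_single φ v h a⟩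

theorem IsCovariantPair.mul_mul_mul {α : H →* (A →ₐ[R] A)} {φ : A →ₐ[R] T} {v : H →* T}
    (hv : IsCovariantPair α φ v) (a b : A) (g h : H) :
    φ a * v g * (φ b * v h) = φ (a * α g b) * v (g * h) := by
  calc φ a * v g * (φ b * v h) = φ a * (v g * φ b) * v h := by simp only [mul_assoc]
    _ = φ (a * α g b) * v (g * h) := by rw [hv]; simp only [map_mul, mul_assoc]

namespace IsSmashProduct

variable {α : H →* (A →ₐ[R] A)} {ι : A →ₐ[R] S} {u : H →* S}

/-- The identification of a smash product with `A ⊗ RH`, realised as `H →₀ A`. -/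
def linearEquiv (hS : IsSmashProduct α ι u) : (H →₀ A) ≃ₗ[R] S :=
  LinearEquiv.ofBijective (smashMap ι u) hS.bijective

theorem linearEquiv_symm_mul (hS : IsSmashProduct α ι u) (a : A) (h : H) :
    hS.linearEquiv.symm (ι a * u h) = Finsupp.single h a :=
  hS.linearEquiv.symm_apply_eq.2 (smashMap_single ι u h a).symm

theorem linearMap_ext (hS : IsSmashProduct α ι u) {f g : S →ₗ[R] M}
    (hfg : ∀ a h, f (ι a * u h) = g (ι a * u h)) : f = g := by
  have hcomp : f ∘ₗ smashMap ι u = g ∘ₗ smashMap ι u := by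
    ext h a
    simpa using hfg a h
  exact LinearMap.cancel_right hS.bijective.2 |>.1 hcomp

theorem smashMap_linearEquiv_symm_mul (hS : IsSmashProduct α ι u) (φ : A →ₐ[R] T) (v : H →* T)
    (a : A) (h : H) : smashMap φ v (hS.linearEquiv.symm (ι a * u h)) = φ a * v h := by
  rw [linearEquiv_symm_mul, smashMap_single]

/-- The algebra homomorphism `A # H → T` determined by a covariant pair. -/
def lift (hS : IsSmashProduct α ι u) {φ : A →ₐ[R] T} {v : H →* T}
    (hv : IsCovariantPair α φ v) : S →ₐ[R] T :=
  AlgHom.ofLinearMap (smashMap φ v ∘ₗ hS.linearEquiv.symm.toLinearMap)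
    (by simpa using hS.smashMap_linearEquiv_symm_mul φ v 1 1)
    (LinearMap.map_mul_iff _ |>.2 <|
      hS.linearMap_ext fun a g => hS.linearMap_ext fun b h => by
        simp [hS.covariant.mul_mul_mul, hv.mul_mul_mul, smashMap_linearEquiv_symm_mul, -map_mul])

section lift

variable (hS : IsSmashProduct α ι u) {φ : A →ₐ[R] T} {v : H →* T} (hv : IsCovariantPair α φ v)

theorem toLinearMap_lift :
    (hS.lift hv).toLinearMap = smashMap φ v ∘ₗ hS.linearEquiv.symm.toLinearMap :=
  rfl

theorem lift_mul (a : A) (h : H) : hS.lift hv (ι a * u h) = φ a * v h :=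
  hS.smashMap_linearEquiv_symm_mul φ v a h

theorem range_toLinearMap_lift :
    LinearMap.range (hS.lift hv).toLinearMap = LinearMap.range (smashMap φ v) := by
  rw [toLinearMap_lift, LinearMap.range_comp_of_range_eq_top _ (LinearEquiv.range _)]

theorem lift_injective (hinj : Function.Injective (smashMap φ v)) :
    Function.Injective (hS.lift hv) :=
  hinj.comp hS.linearEquiv.symm.injective

end lift

/-- The coefficient `aₕ` of an element `∑ aₕ h` of `A # H`. -/
def coeff (hS : IsSmashProduct α ι u) (h : H) : S →ₗ[R] A :=
  Finsupp.lapply h ∘ₗ hS.linearEquiv.symm.toLinearMap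

theorem coeff_mul (hS : IsSmashProduct α ι u) (h g : H) (a : A) :
    hS.coeff h (ι a * u g) = Finsupp.single g a h := by
  simp [coeff, linearEquiv_symm_mul]

end IsSmashProduct

end SmashProduct

section Enveloping

variable {R A S E : Type*} [CommSemiring R] [Semiring A] [Algebra R A] [Semiring S]
  [Algebra R S] [Semiring E] [Algebra R E]

/-- The map `ι ⊗ ιᵒᵖ` of enveloping algebras induced by `ι`. -/
def envelopingMap (ι : A →ₐ[R] S) : A ⊗[R] Aᵐᵒᵖ →ₐ[R] S ⊗[R] Sᵐᵒᵖ :=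
  Algebra.TensorProduct.map ι (AlgHom.op ι)

@[simp]
theorem envelopingMap_tmul_op (ι : A →ₐ[R] S) (a b : A) :
    envelopingMap ι (a ⊗ₜ op b) = ι a ⊗ₜ op (ι b) :=
  rfl

theorem envelopingMap_id : envelopingMap (AlgHom.id R A) = AlgHom.id R (A ⊗[R] Aᵐᵒᵖ) :=
  Algebra.TensorProduct.map_id

theorem envelopingMap_comp (f : S →ₐ[R] E) (g : A →ₐ[R] S) :
    envelopingMap (f.comp g) = (envelopingMap f).comp (envelopingMap g) :=
  AlgHom.toLinearMap_injective <| TensorProduct.ext' fun _ _ => rfl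

/-- The diagonal action `ʰ(a ⊗ b) = ʰa ⊗ ʰb` on the enveloping algebra `A ⊗ Aᵐᵒᵖ`. -/
def diagonalAction {H : Type*} [Monoid H] (α : H →* (A →ₐ[R] A)) :
    H →* (A ⊗[R] Aᵐᵒᵖ →ₐ[R] A ⊗[R] Aᵐᵒᵖ) where
  toFun h := envelopingMap (α h)
  map_one' := (congrArg envelopingMap (map_one α)).trans envelopingMap_id
  map_mul' g h := (congrArg envelopingMap (map_mul α g h)).trans (envelopingMap_comp _ _)

theorem isCovariantPair_diagonalAction {H : Type*} [Monoid H] {α : H →* (A →ₐ[R] A)}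
    {j : A ⊗[R] Aᵐᵒᵖ →ₐ[R] E} {w : H →* E}
    (hw : ∀ h a b, w h * j (a ⊗ₜ op b) = j (α h a ⊗ₜ op (α h b)) * w h) :
    IsCovariantPair (diagonalAction α) j w := by
  intro h x
  induction x using TensorProduct.induction_on with
  | zero => simp
  | add x y hx hy => simp only [map_add, mul_add, add_mul, hx, hy]
  | tmul a b => exact hw h a b.unop

variable {H : Type*} [Group H]

/-- The homomorphism `h ↦ h ⊗ h⁻¹` into the enveloping algebra `S ⊗ Sᵐᵒᵖ`. -/
def antidiagonal (u : H →* S) : H →* S ⊗[R] Sᵐᵒᵖ where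
  toFun h := u h ⊗ₜ op (u h⁻¹)
  map_one' := by simp [Algebra.TensorProduct.one_def]
  map_mul' g h := by simp

theorem antidiagonal_apply (u : H →* S) (h : H) :
    antidiagonal (R := R) u h = u h ⊗ₜ op (u h⁻¹) :=
  rfl

theorem algHomAction_apply_inv_apply (α : H →* (A →ₐ[R] A)) (h : H) (a : A) :
    α h (α h⁻¹ a) = a := by
  rw [← AlgHom.mul_apply, ← map_mul, mul_inv_cancel, map_one, AlgHom.one_apply]

theorem algHomAction_inv_apply_apply (α : H →* (A →ₐ[R] A)) (h : H) (a : A) :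
    α h⁻¹ (α h a) = a := by
  simpa only [inv_inv] using algHomAction_apply_inv_apply α h⁻¹ a

variable {α : H →* (A →ₐ[R] A)} {ι : A →ₐ[R] S} {u : H →* S}

theorem IsCovariantPair.map_inv_mul_map_apply (hu : IsCovariantPair α ι u) (h : H) (a : A) :
    u h⁻¹ * ι (α h a) = ι a * u h⁻¹ := by
  rw [hu, algHomAction_inv_apply_apply]

theorem IsCovariantPair.enveloping (hu : IsCovariantPair α ι u) :
    IsCovariantPair (diagonalAction α) (envelopingMap ι) (antidiagonal u) :=
  isCovariantPair_diagonalAction fun h a b => by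
    simp only [antidiagonal_apply, envelopingMap_tmul_op, Algebra.TensorProduct.tmul_mul_tmul,
      ← op_mul, hu h a, hu.map_inv_mul_map_apply]

theorem IsCovariantPair.envelopingMap_mul_antidiagonal (hu : IsCovariantPair α ι u)
    (a b : A) (h : H) :
    envelopingMap ι (a ⊗ₜ op b) * antidiagonal u h =
      (ι a * u h) ⊗ₜ op (ι (α h⁻¹ b) * u h⁻¹) := by
  rw [envelopingMap_tmul_op, antidiagonal_apply, Algebra.TensorProduct.tmul_mul_tmul, ← op_mul,
    hu h⁻¹ b]

/-- The subspace `⊕ₕ (Ah ⊗ Ah⁻¹)` of `S ⊗ Sᵐᵒᵖ`, as the span of its pure tensors. -/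
def antidiagonalSubmodule (ι : A →ₐ[R] S) (u : H →* S) : Submodule R (S ⊗[R] Sᵐᵒᵖ) :=
  Submodule.span R {z | ∃ a b h, z = (ι a * u h) ⊗ₜ op (ι b * u h⁻¹)}

theorem IsCovariantPair.range_smashMap_enveloping (hu : IsCovariantPair α ι u) :
    LinearMap.range (smashMap (envelopingMap ι) (antidiagonal u)) =
      antidiagonalSubmodule ι u := by
  rw [range_smashMap]
  refine le_antisymm (Submodule.span_le.2 ?_) (Submodule.span_mono ?_)
  · rintro _ ⟨x, h, rfl⟩
    induction x using TensorProduct.induction_on with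
    | zero => simp
    | add x y hx hy => rw [map_add, add_mul]; exact add_mem hx hy
    | tmul a b =>
      exact Submodule.subset_span ⟨a, _, h, hu.envelopingMap_mul_antidiagonal a b.unop h⟩
  · rintro _ ⟨a, b, h, rfl⟩
    refine ⟨a ⊗ₜ op (α h b), h, ?_⟩
    rw [hu.envelopingMap_mul_antidiagonal, ← hu h⁻¹, hu.map_inv_mul_map_apply]

namespace IsSmashProduct

/-- The map `S ⊗ Sᵐᵒᵖ → A ⊗ Aᵐᵒᵖ` that reads off the coefficient `a ⊗ b` of `h` from
`ah ⊗ (^{h⁻¹}b)h⁻¹`. -/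
def antidiagonalCoeff (hS : IsSmashProduct α ι u) (h : H) : S ⊗[R] Sᵐᵒᵖ →ₗ[R] A ⊗[R] Aᵐᵒᵖ :=
  TensorProduct.map (hS.coeff h)
    ((opLinearEquiv R).toLinearMap ∘ₗ (α h).toLinearMap ∘ₗ hS.coeff h⁻¹ ∘ₗ
      (opLinearEquiv R).symm.toLinearMap)

theorem antidiagonalCoeff_tmul_op (hS : IsSmashProduct α ι u) (h : H) (s t : S) :
    hS.antidiagonalCoeff h (s ⊗ₜ op t) = hS.coeff h s ⊗ₜ op (α h (hS.coeff h⁻¹ t)) :=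
  rfl

theorem antidiagonalCoeff_comp_smashMap (hS : IsSmashProduct α ι u) (h : H) :
    hS.antidiagonalCoeff h ∘ₗ smashMap (envelopingMap ι) (antidiagonal u) =
      Finsupp.lapply h := by
  ext1 g
  refine TensorProduct.ext' fun a b => ?_
  induction b using MulOpposite.rec' with | _ b
  simp only [LinearMap.comp_apply, Finsupp.lsingle_apply, smashMap_single,
    hS.covariant.envelopingMap_mul_antidiagonal, antidiagonalCoeff_tmul_op, coeff_mul,
    Finsupp.lapply_apply]
  obtain rfl | hgh := eq_or_ne g h
  · simp only [Finsupp.single_eq_same, algHomAction_apply_inv_apply]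
  · simp only [Finsupp.single_eq_of_ne' hgh, TensorProduct.zero_tmul]

theorem smashMap_enveloping_injective (hS : IsSmashProduct α ι u) :
    Function.Injective (smashMap (envelopingMap ι) (antidiagonal (R := R) u)) := by
  intro s t hst
  ext1 h
  simpa only [← LinearMap.comp_apply, antidiagonalCoeff_comp_smashMap, Finsupp.lapply_apply] using
    congrArg (hS.antidiagonalCoeff h) hst

end IsSmashProduct

theorem statement2_general {j : A ⊗[R] Aᵐᵒᵖ →ₐ[R] E} {w : H →* E}
    (hS : IsSmashProduct α ι u) (hE : IsSmashProduct (diagonalAction α) j w) :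
    ∃ f : E →ₐ[R] S ⊗[R] Sᵐᵒᵖ,
      Function.Injective f ∧
      LinearMap.range f.toLinearMap = antidiagonalSubmodule ι u ∧
      ∀ (a b : A) (h : H),
        f (j (a ⊗ₜ op b) * w h) = (ι a * u h) ⊗ₜ op (ι (α h⁻¹ b) * u h⁻¹) := by
  have hcov := hS.covariant.enveloping
  refine ⟨hE.lift hcov, hE.lift_injective hcov hS.smashMap_enveloping_injective, ?_, ?_⟩
  · rw [hE.range_toLinearMap_lift, hS.covariant.range_smashMap_enveloping]
  · intro a b h
    rw [hE.lift_mul, hS.covariant.envelopingMap_mul_antidiagonal]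

end Enveloping

/-- **Statement 2.** The map `(a⊗b)g ↦ ag ⊗ (^{g⁻¹}b)g⁻¹` is an isomorphism
of `k`-algebras from `Aᵉ # kG` onto the subalgebra `⊕_{g∈G}(Ag ⊗ Ag⁻¹)` of
`Bᵉ`. -/
theorem statement2
    (hskew : IsSkewGroupAlgebra k G χ n σ B ιA ιG)
    (hdiag : IsDiagSkewGroupAlgebra k G n σ C ιAe ιG') :
    ∃ f : C →ₐ[k] B ⊗[k] Bᵐᵒᵖ,
      Function.Injective f ∧
      LinearMap.range f.toLinearMap = DD k G n B ιA ιG ∧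
      ∀ (a b : AA k n) (g : G),
        f (ιAe (a ⊗ₜ[k] op b) * ((ιG' g : Cˣ) : C)) =
          (ιA a * ((ιG g : Bˣ) : B)) ⊗ₜ[k]
            op (ιA (σ g⁻¹ b) * ((ιG g⁻¹ : Bˣ) : B)) :=
  statement2_general (α := (AlgEquiv.toAlgHomHom k _).comp σ)
    (u := (Units.coeHom B).comp ιG) (w := (Units.coeHom C).comp ιG')
    ⟨hskew.comm, hskew.bijective⟩ ⟨isCovariantPair_diagonalAction hdiag.comm, hdiag.bijective⟩

end
end

section
/- There is a (unique) Hopf algebra structure on the skew group algebra B = A # kG whose coproduct Δ satisfies Δ(x) = x ⊗ 1 + g_1 ⊗ x and Δ(g) = g ⊗ g for all g ∈ G, whose counit ε satisfies ε(x) = 0 and ε(g) = 1, and whose antipode S satisfies S(x) = −g_1^{-1}x and S(g) = g^{-1} for all g ∈ G. -/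
/- STATEMENT 3:
There is a (unique) Hopf algebra structure on the skew group algebra
`B = A # kG` whose coproduct satisfies `Δ(x) = x ⊗ 1 + g₁ ⊗ x` and
`Δ(g) = g ⊗ g`, whose counit satisfies `ε(x) = 0`, `ε(g) = 1`, and whose
antipode satisfies `S(x) = -g₁⁻¹x` and `S(g) = g⁻¹`. -/

open TensorProduct MulOpposite Polynomial CategoryTheory

noncomputable section

variable (k : Type) [Field k]
variable (G : Type) [Group G] [Fintype G]
variable (χ : G →* kˣ)
variable (n : ℕ)

variable (σ : G →* (AA k n ≃ₐ[k] AA k n))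
variable (B : Type) [Ring B] [Algebra k B]
variable (ιA : AA k n →ₐ[k] B) (ιG : G →* Bˣ)

/-!
By its universal property, an algebra homomorphism out of `B = A # kG` is the same as an element
`r` with `rⁿ = 0` together with a compatible image of `G`, and all Hopf algebra axioms need only be
checked on the generators `x` and `g ∈ G`; for the antipode axioms this uses that `S` is
anti-multiplicative.

The only non-formal point is `(x ⊗ 1 + g₁ ⊗ x)ⁿ = 0`. The two summands `q`-commute for `q = χ(g₁)`,
so the power expands by the `q`-binomial theorem, and the intermediate coefficients vanish at a
primitive `n`-th root of unity because `[i] (n choose i) = [n] (n - 1 choose i - 1)` with `[n] = 0`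
and `[i] ≠ 0` for `0 < i < n`. The extreme terms vanish because `xⁿ = 0`.

For uniqueness, `Δ` and `ε` are determined on generators, and `S` is the inverse of the identity
for convolution.
-/

section QBinomial

open Finset (range)
open Finset.HasAntidiagonal (antidiagonal mem_antidiagonal)

variable {R : Type*}

/-- The Gaussian binomial coefficient `m choose i` at `q`. It is defined by the `q`-Pascal rule
rather than as a quotient of `q`-factorials, so that `q` may be a root of unity. -/
def qChoose [CommSemiring R] (q : R) : ℕ → ℕ → R
  | _, 0 => 1
  | 0, _ + 1 => 0
  | m + 1, i + 1 => qChoose q m i + q ^ (i + 1) * qChoose q m (i + 1)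

section CommSemiring

variable [CommSemiring R]

theorem qChoose_zero_right (q : R) (m : ℕ) : qChoose q m 0 = 1 := by
  cases m <;> rfl

theorem qChoose_succ_succ (q : R) (m i : ℕ) :
    qChoose q (m + 1) (i + 1) = qChoose q m i + q ^ (i + 1) * qChoose q m (i + 1) :=
  rfl

theorem qChoose_eq_zero_of_lt (q : R) {m i : ℕ} (h : m < i) : qChoose q m i = 0 := by
  induction m generalizing i with
  | zero =>
    obtain ⟨i, rfl⟩ := Nat.exists_eq_succ_of_ne_zero h.ne'
    rfl
  | succ m ih =>
    obtain ⟨i, rfl⟩ := Nat.exists_eq_succ_of_ne_zero h.ne_bot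
    rw [qChoose_succ_succ, ih (by lia), ih (by lia), mul_zero, add_zero]

theorem qChoose_self (q : R) (m : ℕ) : qChoose q m m = 1 := by
  induction m with
  | zero => rfl
  | succ m ih =>
    rw [qChoose_succ_succ, ih, qChoose_eq_zero_of_lt q m.lt_succ_self, mul_zero, add_zero]

theorem geom_sum_mul_qChoose_succ_succ (q : R) (m i : ℕ) :
    (∑ t ∈ range (i + 1), q ^ t) * qChoose q (m + 1) (i + 1) =
      (∑ t ∈ range (m + 1), q ^ t) * qChoose q m i := by
  induction m generalizing i with
  | zero => cases i <;> simp [qChoose]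
  | succ m ih =>
    cases i with
    | zero =>
      have h := ih 0
      simp only [zero_add, Finset.sum_range_one, pow_zero, one_mul, qChoose_zero_right,
        mul_one] at h ⊢
      rw [qChoose_succ_succ, h, qChoose_zero_right, geom_sum_succ (n := m + 1)]
      ring
    | succ i =>
      calc (∑ t ∈ range (i + 1 + 1), q ^ t) * qChoose q (m + 1 + 1) (i + 1 + 1)
        _ = qChoose q (m + 1) (i + 1) +
            q * ((∑ t ∈ range (i + 1), q ^ t) * qChoose q (m + 1) (i + 1)) +
            q ^ (i + 2) *
              ((∑ t ∈ range (i + 1 + 1), q ^ t) * qChoose q (m + 1) (i + 1 + 1)) := by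
          rw [qChoose_succ_succ q (m + 1), geom_sum_succ (n := i + 1)]
          ring
        _ = qChoose q (m + 1) (i + 1) + q * (∑ t ∈ range (m + 1), q ^ t) *
            (qChoose q m i + q ^ (i + 1) * qChoose q m (i + 1)) := by
          rw [ih, ih]
          ring
        _ = (∑ t ∈ range (m + 1 + 1), q ^ t) * qChoose q (m + 1) (i + 1) := by
          rw [← qChoose_succ_succ, geom_sum_succ (n := m + 1)]
          ring

end CommSemiring

theorem qChoose_eq_zero_of_isPrimitiveRoot [CommRing R] [IsDomain R] {q : R} {m i : ℕ}
    (hq : IsPrimitiveRoot q m) (hi : i ≠ 0) (him : i < m) : qChoose q m i = 0 := by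
  obtain ⟨i, rfl⟩ := Nat.exists_eq_succ_of_ne_zero hi
  obtain ⟨m, rfl⟩ := Nat.exists_eq_succ_of_ne_zero him.ne_bot
  have hi_sum : ∑ t ∈ range (i + 1), q ^ t ≠ 0 := fun h =>
    hq.pow_ne_one_of_pos_of_lt hi him <| by rw [← sub_eq_zero, ← geom_sum_mul, h, zero_mul]
  have h_mul := geom_sum_mul_qChoose_succ_succ q m i
  rw [hq.geom_sum_eq_zero (by lia), zero_mul] at h_mul
  exact (mul_eq_zero.1 h_mul).resolve_left hi_sum

section SkewCommuting

variable {A : Type*} [Semiring A]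

theorem add_pow_of_semiconjBy_smul [CommSemiring R] [Algebra R A] {q : R} {u v : A}
    (h : SemiconjBy v u (q • u)) (m : ℕ) :
    (u + v) ^ m = ∑ p ∈ antidiagonal m, qChoose q m p.1 • (u ^ p.1 * v ^ p.2) := by
  induction m with
  | zero => simp [qChoose_zero_right]
  | succ m ih =>
    have hv (p : ℕ × ℕ) : v * (qChoose q m p.1 • (u ^ p.1 * v ^ p.2)) =
        (q ^ p.1 * qChoose q m p.1) • (u ^ p.1 * v ^ (p.2 + 1)) := by
      rw [mul_smul_comm, ← mul_assoc, (h.pow_right p.1).eq, _root_.smul_pow, smul_mul_assoc,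
        smul_mul_assoc, smul_smul, mul_comm, mul_assoc, ← pow_succ']
    have hv_sum : ∑ p ∈ antidiagonal m, v * (qChoose q m p.1 • (u ^ p.1 * v ^ p.2)) =
        v ^ (m + 1) + ∑ p ∈ antidiagonal m,
          (q ^ (p.1 + 1) * qChoose q m (p.1 + 1)) • (u ^ (p.1 + 1) * v ^ p.2) := by
      have := (Finset.Nat.sum_antidiagonal_succ' (n := m) (f := fun p =>
        (q ^ p.1 * qChoose q m p.1) • (u ^ p.1 * v ^ p.2))).symm.trans
          Finset.Nat.sum_antidiagonal_succ
      simpa [hv, qChoose_eq_zero_of_lt, qChoose_zero_right] using this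
    rw [pow_succ', ih, add_mul, Finset.mul_sum, Finset.mul_sum, hv_sum,
      Finset.Nat.sum_antidiagonal_succ, add_left_comm, ← Finset.sum_add_distrib]
    simp only [qChoose_zero_right, qChoose_succ_succ, pow_zero, one_mul, one_smul, add_smul,
      mul_smul_comm, ← mul_assoc, ← pow_succ']

theorem mul_pow_of_semiconjBy_smul [CommSemiring R] [Algebra R A] {q : R} {u v : A}
    (h : SemiconjBy v u (q • u)) (m : ℕ) :
    (v * u) ^ m = q ^ (m + 1).choose 2 • (u ^ m * v ^ m) := by
  induction m with
  | zero => simp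
  | succ m ih =>
    calc (v * u) ^ (m + 1)
      _ = q ^ (m + 1).choose 2 • (v * u ^ (m + 1) * v ^ m) := by
        rw [pow_succ', ih, mul_smul_comm, pow_succ']
        simp only [mul_assoc]
      _ = (q ^ (m + 1).choose 2 * q ^ (m + 1)) • (u ^ (m + 1) * v ^ (m + 1)) := by
        rw [(h.pow_right (m + 1)).eq, _root_.smul_pow, smul_mul_assoc, smul_mul_assoc, smul_smul,
          mul_assoc, ← pow_succ']
      _ = q ^ (m + 1 + 1).choose 2 • (u ^ (m + 1) * v ^ (m + 1)) := by
        rw [← pow_add, Nat.choose_succ_succ' (m + 1) 1, Nat.choose_one_right, add_comm (m + 1)]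

theorem add_pow_of_semiconjBy_smul_of_isPrimitiveRoot [CommRing R] [IsDomain R] [Algebra R A]
    {q : R} {u v : A} (h : SemiconjBy v u (q • u)) {m : ℕ} (hm : m ≠ 0)
    (hq : IsPrimitiveRoot q m) : (u + v) ^ m = u ^ m + v ^ m := by
  obtain ⟨m, rfl⟩ := Nat.exists_eq_succ_of_ne_zero hm
  have h_last : ∑ p ∈ antidiagonal m,
      qChoose q (m + 1) (p.1 + 1) • (u ^ (p.1 + 1) * v ^ p.2) = u ^ (m + 1) := by
    rw [Finset.sum_eq_single_of_mem (m, 0) (by simp), qChoose_self, one_smul, pow_zero, mul_one]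
    rintro ⟨i, j⟩ hij hne
    have him : i + 1 < m + 1 := by
      rw [mem_antidiagonal] at hij
      grind
    rw [qChoose_eq_zero_of_isPrimitiveRoot hq i.succ_ne_zero him, zero_smul]
  rw [add_pow_of_semiconjBy_smul h, Finset.Nat.sum_antidiagonal_succ, h_last,
    qChoose_zero_right, one_smul, pow_zero, one_mul, add_comm]

end SkewCommuting

end QBinomial

section Antipode

open LinearMap WithConv Coalgebra

variable {R H : Type*} [CommSemiring R] [Semiring H]

section Algebra

variable [Algebra R H] {S : H →ₗ[R] H}

theorem mul'_map_id_right_mul_tmul (hS : ∀ a b, S (a * b) = S b * S a) (s : H ⊗[R] H) (a b : H) :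
    mul' R H (TensorProduct.map S .id (s * a ⊗ₜ b)) =
      S a * mul' R H (TensorProduct.map S .id s) * b := by
  induction s with
  | zero => simp
  | tmul c d => simp [hS, mul_assoc]
  | add s t hs ht => simp only [add_mul, mul_add, map_add, hs, ht]

theorem mul'_map_id_left_tmul_mul (hS : ∀ a b, S (a * b) = S b * S a) (a b : H) (s : H ⊗[R] H) :
    mul' R H (TensorProduct.map .id S (a ⊗ₜ b * s)) =
      a * mul' R H (TensorProduct.map .id S s) * S b := by
  induction s with
  | zero => simp
  | tmul c d => simp [hS, mul_assoc]
  | add s t hs ht => simp only [add_mul, mul_add, map_add, hs, ht]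

theorem mul'_map_id_right_mul (hS : ∀ a b, S (a * b) = S b * S a) {s : H ⊗[R] H} {r : R}
    (hs : mul' R H (TensorProduct.map S .id s) = algebraMap R H r) (t : H ⊗[R] H) :
    mul' R H (TensorProduct.map S .id (s * t)) =
      algebraMap R H r * mul' R H (TensorProduct.map S .id t) := by
  induction t with
  | zero => simp
  | tmul a b =>
    rw [mul'_map_id_right_mul_tmul hS, hs, ← Algebra.commutes, mul_assoc, map_tmul, mul'_apply,
      LinearMap.id_apply]
  | add t u ht hu => simp only [mul_add, map_add, ht, hu]

theorem mul'_map_id_left_mul (hS : ∀ a b, S (a * b) = S b * S a) (s : H ⊗[R] H) {t : H ⊗[R] H}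
    {r : R} (ht : mul' R H (TensorProduct.map .id S t) = algebraMap R H r) :
    mul' R H (TensorProduct.map .id S (s * t)) =
      mul' R H (TensorProduct.map .id S s) * algebraMap R H r := by
  induction s with
  | zero => simp
  | tmul a b =>
    rw [mul'_map_id_left_tmul_mul hS, ht, mul_assoc, Algebra.commutes, ← mul_assoc, map_tmul,
      mul'_apply, LinearMap.id_apply]
  | add s u hs hu => simp only [add_mul, map_add, hs, hu]

end Algebra

section Bialgebra

variable [Bialgebra R H] {S : H →ₗ[R] H} {X : Set H}

theorem convMul_id_eq_one_of_adjoin_eq_top (hS_one : S 1 = 1)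
    (hS : ∀ a b, S (a * b) = S b * S a) (hX : Algebra.adjoin R X = ⊤)
    (h : ∀ x ∈ X, mul' R H (TensorProduct.map S .id (comul x)) = algebraMap R H (counit x)) :
    toConv S * toConv .id = 1 := by
  ext b
  change mul' R H (TensorProduct.map S .id (comul b)) = algebraMap R H (counit b)
  have hb : b ∈ Algebra.adjoin R X := hX ▸ Algebra.mem_top
  induction hb using Algebra.adjoin_induction with
  | mem x hx => exact h x hx
  | algebraMap r =>
    simp [Algebra.algebraMap_eq_smul_one, Algebra.TensorProduct.one_def, hS_one]
  | add x y _ _ hx hy => simp only [map_add, hx, hy]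
  | mul x y _ _ hx hy =>
    rw [Bialgebra.comul_mul, mul'_map_id_right_mul hS hx, hy, Bialgebra.counit_mul, map_mul]

theorem id_convMul_eq_one_of_adjoin_eq_top (hS_one : S 1 = 1)
    (hS : ∀ a b, S (a * b) = S b * S a) (hX : Algebra.adjoin R X = ⊤)
    (h : ∀ x ∈ X, mul' R H (TensorProduct.map .id S (comul x)) = algebraMap R H (counit x)) :
    toConv .id * toConv S = 1 := by
  ext b
  change mul' R H (TensorProduct.map .id S (comul b)) = algebraMap R H (counit b)
  have hb : b ∈ Algebra.adjoin R X := hX ▸ Algebra.mem_top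
  induction hb using Algebra.adjoin_induction with
  | mem x hx => exact h x hx
  | algebraMap r =>
    simp [Algebra.algebraMap_eq_smul_one, Algebra.TensorProduct.one_def, hS_one]
  | add x y _ _ hx hy => simp only [map_add, hx, hy]
  | mul x y _ _ hx hy =>
    rw [Bialgebra.comul_mul, mul'_map_id_left_mul hS _ hy, hx, Bialgebra.counit_mul, map_mul]

end Bialgebra

theorem eq_antipode_of_mul'_map_id_right [HopfAlgebra R H] {S : H →ₗ[R] H}
    (hS : mul' R H ∘ₗ TensorProduct.map S .id ∘ₗ comul = Algebra.linearMap R H ∘ₗ counit) :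
    S = HopfAlgebra.antipode R :=
  toConv_injective <| left_inv_eq_right_inv (congrArg toConv hS) (id_mul_antipode (R := R) (C := H))

end Antipode

theorem commute_map_of_mem_center {G M : Type*} [Group G] [Monoid M] (f : G →* M) {z : G}
    (hz : z ∈ Subgroup.center G) (g : G) : Commute (f g) (f z) :=
  have h : Commute g z := Subgroup.mem_center_iff.1 hz g
  h.map f

theorem ne_zero_of_isPrimitiveRoot_map {G M : Type*} [Group G] [Finite G] [CommMonoid M]
    (f : G →* M) {g : G} {n : ℕ} (h : IsPrimitiveRoot (f g) n) : n ≠ 0 :=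
  h.eq_orderOf ▸ (f.isOfFinOrder (isOfFinOrder_of_finite g)).orderOf_pos.ne'

theorem semiconjBy_of_adjoin_eq_top {R A C : Type*} [CommSemiring R] [Semiring A] [Algebra R A]
    [Semiring C] [Algebra R C] {X : Set A} (hX : Algebra.adjoin R X = ⊤) {f f' : A →ₐ[R] C} {c : C}
    (h : ∀ x ∈ X, SemiconjBy c (f x) (f' x)) (a : A) : SemiconjBy c (f a) (f' a) := by
  have ha : a ∈ Algebra.adjoin R X := hX ▸ Algebra.mem_top
  induction ha using Algebra.adjoin_induction with
  | mem x hx => exact h x hx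
  | algebraMap r =>
    rw [AlgHom.commutes, AlgHom.commutes]
    exact (Algebra.commutes r c).symm
  | add x y _ _ hx hy => simpa only [map_add] using hx.add_right hy
  | mul x y _ _ hx hy => simpa only [map_mul] using hx.mul_right hy

section TruncatedPolynomial

variable {k n}

theorem xA_pow_self : xA k n ^ n = 0 := by
  rw [xA, ← map_pow]
  exact Ideal.Quotient.eq_zero_iff_mem.2 (Ideal.mem_span_singleton_self _)

theorem map_xA_pow_self {R : Type*} [Semiring R] [Algebra k R] (f : AA k n →ₐ[k] R) :
    f (xA k n) ^ n = 0 := by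
  rw [← map_pow, xA_pow_self, map_zero]

theorem adjoin_xA : Algebra.adjoin k {xA k n} = ⊤ := by
  have h_range : (Ideal.Quotient.mkₐ k (Ideal.span {(X : k[X]) ^ n})).range = ⊤ :=
    AlgHom.range_eq_top _ |>.2 (Ideal.Quotient.mkₐ_surjective k _)
  rw [← h_range, ← Algebra.map_top, ← Polynomial.adjoin_X, AlgHom.map_adjoin_singleton]
  rfl

/-- The algebra homomorphism out of `k[x]/(xⁿ)` sending `x` to a given `r` with `rⁿ = 0`. -/
def AA.lift {R : Type*} [Semiring R] [Algebra k R] (r : R) (hr : r ^ n = 0) : AA k n →ₐ[k] R :=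
  Ideal.Quotient.liftₐ _ (aeval r) fun p hp => by
    obtain ⟨s, rfl⟩ := Ideal.mem_span_singleton.1 hp
    simp [hr]

theorem AA.lift_xA {R : Type*} [Semiring R] [Algebra k R] (r : R) (hr : r ^ n = 0) :
    AA.lift r hr (xA k n) = r :=
  aeval_X r

end TruncatedPolynomial

section SkewGroupAlgebra

variable {k G χ n σ B ιA ιG}

omit [Fintype G]

theorem skewCombine_single (g : G) (a : AA k n) :
    skewCombine k G n B ιA ιG (Finsupp.single g a) = ιA a * (ιG g : B) := by
  simp [skewCombine]

namespace IsSkewGroupAlgebra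

theorem induction_on (hskew : IsSkewGroupAlgebra k G χ n σ B ιA ιG) {P : B → Prop} (b : B)
    (zero : P 0) (add : ∀ b c, P b → P c → P (b + c))
    (mul : ∀ (a : AA k n) (g : G), P (ιA a * (ιG g : B))) : P b := by
  obtain ⟨v, rfl⟩ := hskew.bijective.2 b
  induction v using Finsupp.induction_linear with
  | zero => rwa [map_zero]
  | add v w hv hw => rw [map_add]; exact add _ _ hv hw
  | single g a => rw [skewCombine_single]; exact mul a g

theorem adjoin_eq_top (hskew : IsSkewGroupAlgebra k G χ n σ B ιA ιG) :
    Algebra.adjoin k (insert (ιA (xA k n)) (Set.range fun g => (ιG g : B))) = ⊤ := by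
  have hA (a : AA k n) :
      ιA a ∈ Algebra.adjoin k (insert (ιA (xA k n)) (Set.range fun g => (ιG g : B))) := by
    have ha : ιA a ∈ (Algebra.adjoin k {xA k n}).map ιA := 
      ⟨a, adjoin_xA (k := k) ▸ Algebra.mem_top, rfl⟩
    rw [AlgHom.map_adjoin_singleton] at ha
    exact Algebra.adjoin_mono (Set.singleton_subset_iff.2 (Set.mem_insert _ _)) ha
  exact eq_top_iff.2 fun b _ => hskew.induction_on b (zero_mem _) (fun _ _ => add_mem)
    fun a g => mul_mem (hA a) (Algebra.subset_adjoin (.inr ⟨g, rfl⟩))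

theorem algHom_ext (hskew : IsSkewGroupAlgebra k G χ n σ B ιA ιG) {R : Type*} [Semiring R]
    [Algebra k R] {φ ψ : B →ₐ[k] R} (hx : φ (ιA (xA k n)) = ψ (ιA (xA k n)))
    (hg : ∀ g, φ (ιG g : B) = ψ (ιG g : B)) : φ = ψ :=
  AlgHom.ext_of_adjoin_eq_top hskew.adjoin_eq_top <| by
    rintro _ (rfl | ⟨g, rfl⟩)
    exacts [hx, hg g]

theorem mul_mul_mul (hskew : IsSkewGroupAlgebra k G χ n σ B ιA ιG) (a a' : AA k n) (g g' : G) :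
    ιA a * (ιG g : B) * (ιA a' * (ιG g' : B)) = ιA (a * σ g a') * (ιG (g * g') : B) := by
  rw [mul_assoc, ← mul_assoc (ιG g : B), hskew.comm, map_mul, map_mul, Units.val_mul]
  simp only [mul_assoc]

theorem semiconjBy_x (hskew : IsSkewGroupAlgebra k G χ n σ B ιA ιG) (g : G) :
    SemiconjBy (ιG g : B) (ιA (xA k n)) ((χ g : k) • ιA (xA k n)) := by
  rw [SemiconjBy, hskew.comm, hskew.action_x, map_smul]

section Lift

variable {R : Type*} [Semiring R] [Algebra k R]

/-- The linear map `a g ↦ f a * φ g` on the skew group algebra; `IsSkewGroupAlgebra.lift` shows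
that it is multiplicative when `f` and `φ` are compatible with the action of `G`. -/
def linearLift (hskew : IsSkewGroupAlgebra k G χ n σ B ιA ιG) (f : AA k n →ₐ[k] R) (φ : G →* R) :
    B →ₗ[k] R :=
  (Finsupp.lsum k fun g : G => LinearMap.mulRight k (φ g) ∘ₗ f.toLinearMap) ∘ₗ
    (LinearEquiv.ofBijective (skewCombine k G n B ιA ιG) hskew.bijective).symm.toLinearMap

theorem linearLift_mul (hskew : IsSkewGroupAlgebra k G χ n σ B ιA ιG) (f : AA k n →ₐ[k] R)
    (φ : G →* R) (a : AA k n) (g : G) : hskew.linearLift f φ (ιA a * (ιG g : B)) = f a * φ g := by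
  have h_symm : (LinearEquiv.ofBijective (skewCombine k G n B ιA ιG) hskew.bijective).symm
      (ιA a * (ιG g : B)) = Finsupp.single g a :=
    (LinearEquiv.symm_apply_eq _).2 (skewCombine_single g a).symm
  simp [linearLift, h_symm]

/-- The universal property of the skew group algebra: algebra homomorphisms out of `A # kG` are
given by covariant pairs, i.e. by `f : A → R` and `φ : G → R` with `φ g * f a = f (ᵍa) * φ g`. -/
def lift (hskew : IsSkewGroupAlgebra k G χ n σ B ιA ιG) (f : AA k n →ₐ[k] R) (φ : G →* R)
    (h : ∀ g a, SemiconjBy (φ g) (f a) (f (σ g a))) : B →ₐ[k] R :=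
  AlgHom.ofLinearMap (hskew.linearLift f φ)
    (by simpa using hskew.linearLift_mul f φ 1 1)
    fun b c => by
      induction b using hskew.induction_on with
      | zero => simp
      | add b b' hb hb' => simp only [add_mul, map_add, hb, hb']
      | mul a g =>
        induction c using hskew.induction_on with
        | zero => simp
        | add c c' hc hc' => simp only [mul_add, map_add, hc, hc']
        | mul a' g' =>
          rw [hskew.mul_mul_mul, linearLift_mul, linearLift_mul, linearLift_mul, map_mul f,
            map_mul φ, mul_assoc, ← mul_assoc (f (σ g a')), ← (h g a').eq]
          simp only [mul_assoc]

theorem lift_mul (hskew : IsSkewGroupAlgebra k G χ n σ B ιA ιG) (f : AA k n →ₐ[k] R) (φ : G →* R)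
    (h : ∀ g a, SemiconjBy (φ g) (f a) (f (σ g a))) (a : AA k n) (g : G) :
    hskew.lift f φ h (ιA a * (ιG g : B)) = f a * φ g :=
  hskew.linearLift_mul f φ a g

/-- The universal property of `k[x]/(xⁿ) # kG` in terms of the generator `x`. -/
def liftGenerators (hskew : IsSkewGroupAlgebra k G χ n σ B ιA ιG) (r : R) (φ : G →* R)
    (hr : r ^ n = 0) (h : ∀ g, SemiconjBy (φ g) r ((χ g : k) • r)) : B →ₐ[k] R :=
  hskew.lift (AA.lift r hr) φ fun g =>
    semiconjBy_of_adjoin_eq_top (f' := (AA.lift r hr).comp (σ g).toAlgHom) adjoin_xA <| by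
      rintro _ rfl
      simpa [AA.lift_xA, hskew.action_x] using h g

theorem liftGenerators_x (hskew : IsSkewGroupAlgebra k G χ n σ B ιA ιG) (r : R) (φ : G →* R)
    (hr : r ^ n = 0) (h : ∀ g, SemiconjBy (φ g) r ((χ g : k) • r)) :
    hskew.liftGenerators r φ hr h (ιA (xA k n)) = r := by
  simpa [AA.lift_xA, liftGenerators] using hskew.lift_mul (AA.lift r hr) φ _ (xA k n) 1

theorem liftGenerators_group (hskew : IsSkewGroupAlgebra k G χ n σ B ιA ιG) (r : R) (φ : G →* R)
    (hr : r ^ n = 0) (h : ∀ g, SemiconjBy (φ g) r ((χ g : k) • r)) (g : G) :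
    hskew.liftGenerators r φ hr h (ιG g : B) = φ g := by
  simpa [liftGenerators] using hskew.lift_mul (AA.lift r hr) φ _ 1 g

end Lift

variable {g₁ : G}

theorem x_tmul_one_add_tmul_x_pow_self (hskew : IsSkewGroupAlgebra k G χ n σ B ιA ιG) (hn : n ≠ 0)
    (hprim : IsPrimitiveRoot (χ g₁ : k) n) :
    (ιA (xA k n) ⊗ₜ[k] 1 + (ιG g₁ : B) ⊗ₜ[k] ιA (xA k n)) ^ n = 0 := by
  have h : SemiconjBy ((ιG g₁ : B) ⊗ₜ[k] ιA (xA k n)) (ιA (xA k n) ⊗ₜ[k] 1)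
      ((χ g₁ : k) • (ιA (xA k n) ⊗ₜ[k] (1 : B))) :=
    (hskew.semiconjBy_x g₁).tmul (SemiconjBy.one_right (ιA (xA k n)))
  rw [add_pow_of_semiconjBy_smul_of_isPrimitiveRoot h hn hprim, Algebra.TensorProduct.tmul_pow,
    Algebra.TensorProduct.tmul_pow, map_xA_pow_self, zero_tmul, tmul_zero, add_zero]

/-- The coproduct of the skew group algebra, as an algebra homomorphism. -/
def comulHom (hskew : IsSkewGroupAlgebra k G χ n σ B ιA ιG) (hg₁ : g₁ ∈ Subgroup.center G)
    (hn : n ≠ 0) (hprim : IsPrimitiveRoot (χ g₁ : k) n) : B →ₐ[k] B ⊗[k] B :=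
  hskew.liftGenerators (ιA (xA k n) ⊗ₜ 1 + (ιG g₁ : B) ⊗ₜ ιA (xA k n))
    { toFun g := (ιG g : B) ⊗ₜ (ιG g : B)
      map_one' := by simp [Algebra.TensorProduct.one_def]
      map_mul' g h := by simp }
    (hskew.x_tmul_one_add_tmul_x_pow_self hn hprim) fun g => by
      have h_left : SemiconjBy ((ιG g : B) ⊗ₜ[k] (ιG g : B)) (ιA (xA k n) ⊗ₜ[k] 1)
          ((χ g : k) • (ιA (xA k n) ⊗ₜ[k] (1 : B))) :=
        (hskew.semiconjBy_x g).tmul (SemiconjBy.one_right _)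
      have h_comm : Commute (ιG g : B) (ιG g₁ : B) :=
        (commute_map_of_mem_center ιG hg₁ g).units_val
      have h_right := SemiconjBy.tmul (R := k) h_comm (hskew.semiconjBy_x g)
      rw [tmul_smul] at h_right
      rw [smul_add]
      exact h_left.add_right h_right

theorem comulHom_x (hskew : IsSkewGroupAlgebra k G χ n σ B ιA ιG) (hg₁ : g₁ ∈ Subgroup.center G)
    (hn : n ≠ 0) (hprim : IsPrimitiveRoot (χ g₁ : k) n) :
    hskew.comulHom hg₁ hn hprim (ιA (xA k n)) =
      ιA (xA k n) ⊗ₜ 1 + (ιG g₁ : B) ⊗ₜ ιA (xA k n) :=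
  hskew.liftGenerators_x ..

theorem comulHom_group (hskew : IsSkewGroupAlgebra k G χ n σ B ιA ιG)
    (hg₁ : g₁ ∈ Subgroup.center G) (hn : n ≠ 0) (hprim : IsPrimitiveRoot (χ g₁ : k) n) (g : G) :
    hskew.comulHom hg₁ hn hprim (ιG g : B) = (ιG g : B) ⊗ₜ (ιG g : B) :=
  hskew.liftGenerators_group ..

/-- The counit of the skew group algebra, as an algebra homomorphism. -/
def counitHom (hskew : IsSkewGroupAlgebra k G χ n σ B ιA ιG) (hn : n ≠ 0) : B →ₐ[k] k :=
  hskew.liftGenerators 0 1 (zero_pow hn) (by simp)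

theorem counitHom_x (hskew : IsSkewGroupAlgebra k G χ n σ B ιA ιG) (hn : n ≠ 0) :
    hskew.counitHom hn (ιA (xA k n)) = 0 :=
  hskew.liftGenerators_x ..

theorem counitHom_group (hskew : IsSkewGroupAlgebra k G χ n σ B ιA ιG) (hn : n ≠ 0) (g : G) :
    hskew.counitHom hn (ιG g : B) = 1 :=
  hskew.liftGenerators_group ..

theorem neg_group_inv_mul_x_pow_self (hskew : IsSkewGroupAlgebra k G χ n σ B ιA ιG) (g : G) :
    (-((ιG g⁻¹ : B) * ιA (xA k n))) ^ n = 0 := by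
  rw [neg_pow, mul_pow_of_semiconjBy_smul (hskew.semiconjBy_x g⁻¹), map_xA_pow_self, zero_mul,
    smul_zero, mul_zero]

/-- The antipode of the skew group algebra, as an algebra homomorphism to the opposite algebra. -/
def antipodeHom (hskew : IsSkewGroupAlgebra k G χ n σ B ιA ιG) (hg₁ : g₁ ∈ Subgroup.center G) :
    B →ₐ[k] Bᵐᵒᵖ :=
  hskew.liftGenerators (op (-((ιG g₁⁻¹ : B) * ιA (xA k n))))
    { toFun g := op (ιG g⁻¹ : B)
      map_one' := by simp
      map_mul' g h := by simp [← op_mul] }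
    (by rw [← op_pow, hskew.neg_group_inv_mul_x_pow_self, op_zero]) fun g => by
      have h : SemiconjBy (ιG g : B) (-((ιG g₁⁻¹ : B) * ιA (xA k n)))
          ((χ g : k) • -((ιG g₁⁻¹ : B) * ιA (xA k n))) := by
        rw [smul_neg, ← mul_smul_comm]
        exact ((commute_map_of_mem_center ιG (inv_mem hg₁) g).units_val.semiconjBy.mul_right
          (hskew.semiconjBy_x g)).neg_right
      have h_inv : SemiconjBy (ιG g⁻¹ : B) ((χ g : k) • -((ιG g₁⁻¹ : B) * ιA (xA k n)))
          (-((ιG g₁⁻¹ : B) * ιA (xA k n))) := by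
        rw [map_inv]
        exact h.units_inv_symm_left
      exact h_inv.op

theorem antipodeHom_x (hskew : IsSkewGroupAlgebra k G χ n σ B ιA ιG)
    (hg₁ : g₁ ∈ Subgroup.center G) :
    hskew.antipodeHom hg₁ (ιA (xA k n)) = op (-((ιG g₁⁻¹ : B) * ιA (xA k n))) :=
  hskew.liftGenerators_x ..

theorem antipodeHom_group (hskew : IsSkewGroupAlgebra k G χ n σ B ιA ιG)
    (hg₁ : g₁ ∈ Subgroup.center G) (g : G) :
    hskew.antipodeHom hg₁ (ιG g : B) = op (ιG g⁻¹ : B) :=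
  hskew.liftGenerators_group ..

/-- The antipode of the skew group algebra, as a linear map. -/
def antipodeMap (hskew : IsSkewGroupAlgebra k G χ n σ B ιA ιG) (hg₁ : g₁ ∈ Subgroup.center G) :
    B →ₗ[k] B :=
  (opLinearEquiv k).symm.toLinearMap ∘ₗ (hskew.antipodeHom hg₁).toLinearMap

theorem antipodeMap_one (hskew : IsSkewGroupAlgebra k G χ n σ B ιA ιG)
    (hg₁ : g₁ ∈ Subgroup.center G) : hskew.antipodeMap hg₁ 1 = 1 := by
  simp [antipodeMap]

theorem antipodeMap_mul (hskew : IsSkewGroupAlgebra k G χ n σ B ιA ιG)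
    (hg₁ : g₁ ∈ Subgroup.center G) (b c : B) :
    hskew.antipodeMap hg₁ (b * c) = hskew.antipodeMap hg₁ c * hskew.antipodeMap hg₁ b := by
  simp [antipodeMap]

theorem antipodeMap_x (hskew : IsSkewGroupAlgebra k G χ n σ B ιA ιG)
    (hg₁ : g₁ ∈ Subgroup.center G) :
    hskew.antipodeMap hg₁ (ιA (xA k n)) = -((ιG g₁⁻¹ : B) * ιA (xA k n)) :=
  congrArg unop (hskew.antipodeHom_x hg₁)

theorem antipodeMap_group (hskew : IsSkewGroupAlgebra k G χ n σ B ιA ιG)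
    (hg₁ : g₁ ∈ Subgroup.center G) (g : G) :
    hskew.antipodeMap hg₁ (ιG g : B) = (ιG g⁻¹ : B) :=
  congrArg unop (hskew.antipodeHom_group hg₁ g)

/-- The bialgebra structure on the skew group algebra with `Δ x = x ⊗ 1 + g₁ ⊗ x`, `ε x = 0` and
all `g : G` grouplike. -/
abbrev bialgebra (hskew : IsSkewGroupAlgebra k G χ n σ B ιA ιG) (hg₁ : g₁ ∈ Subgroup.center G)
    (hn : n ≠ 0) (hprim : IsPrimitiveRoot (χ g₁ : k) n) : Bialgebra k B :=
  Bialgebra.ofAlgHom (hskew.comulHom hg₁ hn hprim) (hskew.counitHom hn)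
    (hskew.algHom_ext
      (by simp [comulHom_x, comulHom_group, tmul_add, add_tmul, Algebra.TensorProduct.one_def,
        add_assoc])
      (by simp [comulHom_group]))
    (hskew.algHom_ext (by simp [comulHom_x, counitHom_x, counitHom_group])
      (by simp [comulHom_group, counitHom_group]))
    (hskew.algHom_ext (by simp [comulHom_x, counitHom_x])
      (by simp [comulHom_group, counitHom_group]))

/-- The Hopf algebra structure on the skew group algebra extending
`IsSkewGroupAlgebra.bialgebra`. -/
abbrev hopfAlgebra (hskew : IsSkewGroupAlgebra k G χ n σ B ιA ιG) (hg₁ : g₁ ∈ Subgroup.center G)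
    (hn : n ≠ 0) (hprim : IsPrimitiveRoot (χ g₁ : k) n) : HopfAlgebra k B :=
  letI := hskew.bialgebra hg₁ hn hprim
  have h_comul_x : Coalgebra.comul (R := k) (ιA (xA k n)) =
      ιA (xA k n) ⊗ₜ 1 + (ιG g₁ : B) ⊗ₜ ιA (xA k n) := hskew.comulHom_x hg₁ hn hprim
  have h_comul_group (g : G) : Coalgebra.comul (R := k) (ιG g : B) = (ιG g : B) ⊗ₜ (ιG g : B) :=
    hskew.comulHom_group hg₁ hn hprim g
  have h_counit_x : Coalgebra.counit (R := k) (ιA (xA k n)) = 0 := hskew.counitHom_x hn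
  have h_counit_group (g : G) : Coalgebra.counit (R := k) (ιG g : B) = 1 :=
    hskew.counitHom_group hn g
  HopfAlgebra.ofConvInverse (hskew.antipodeMap hg₁)
    (convMul_id_eq_one_of_adjoin_eq_top (hskew.antipodeMap_one hg₁) (hskew.antipodeMap_mul hg₁)
      hskew.adjoin_eq_top <| by
        rintro _ (rfl | ⟨g, rfl⟩)
        · simp [h_comul_x, h_counit_x, antipodeMap_x, antipodeMap_group]
        · simp [h_comul_group, h_counit_group, antipodeMap_group])
    (id_convMul_eq_one_of_adjoin_eq_top (hskew.antipodeMap_one hg₁) (hskew.antipodeMap_mul hg₁)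
      hskew.adjoin_eq_top <| by
        rintro _ (rfl | ⟨g, rfl⟩)
        · simp [h_comul_x, h_counit_x, antipodeMap_x, antipodeMap_one]
        · simp [h_comul_group, h_counit_group, antipodeMap_group])

end IsSkewGroupAlgebra

end SkewGroupAlgebra

omit [Fintype G] in
theorem statement3_general
    (g₁ : G) (hg₁ : g₁ ∈ Subgroup.center G)
    (hn : n ≠ 0) (hprim : IsPrimitiveRoot ((χ g₁ : kˣ) : k) n)
    (hskew : IsSkewGroupAlgebra k G χ n σ B ιA ιG) :
    ∃! DES : (B →ₗ[k] B ⊗[k] B) × (B →ₗ[k] k) × (B →ₗ[k] B),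
      (∀ a b : B, DES.1 (a * b) = DES.1 a * DES.1 b) ∧
      DES.1 1 = 1 ∧
      (∀ a b : B, DES.2.1 (a * b) = DES.2.1 a * DES.2.1 b) ∧
      DES.2.1 1 = 1 ∧
      (TensorProduct.assoc k B B B).toLinearMap ∘ₗ
          LinearMap.rTensor B DES.1 ∘ₗ DES.1 =
        LinearMap.lTensor B DES.1 ∘ₗ DES.1 ∧
      LinearMap.rTensor B DES.2.1 ∘ₗ DES.1 = TensorProduct.mk k k B 1 ∧
      LinearMap.lTensor B DES.2.1 ∘ₗ DES.1 = (TensorProduct.mk k B k).flip 1 ∧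
      LinearMap.mul' k B ∘ₗ TensorProduct.map DES.2.2 LinearMap.id ∘ₗ DES.1 =
        Algebra.linearMap k B ∘ₗ DES.2.1 ∧
      LinearMap.mul' k B ∘ₗ TensorProduct.map LinearMap.id DES.2.2 ∘ₗ DES.1 =
        Algebra.linearMap k B ∘ₗ DES.2.1 ∧
      DES.1 (ιA (xA k n)) =
        ιA (xA k n) ⊗ₜ[k] 1 + ((ιG g₁ : Bˣ) : B) ⊗ₜ[k] ιA (xA k n) ∧
      (∀ g : G, DES.1 ((ιG g : Bˣ) : B) =
        ((ιG g : Bˣ) : B) ⊗ₜ[k] ((ιG g : Bˣ) : B)) ∧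
      DES.2.1 (ιA (xA k n)) = 0 ∧
      (∀ g : G, DES.2.1 ((ιG g : Bˣ) : B) = 1) ∧
      DES.2.2 (ιA (xA k n)) = -(((ιG g₁⁻¹ : Bˣ) : B) * ιA (xA k n)) ∧
      (∀ g : G, DES.2.2 ((ιG g : Bˣ) : B) = ((ιG g⁻¹ : Bˣ) : B)) := by
  let := hskew.hopfAlgebra hg₁ hn hprim
  have hΔx := hskew.comulHom_x hg₁ hn hprim
  have hΔg := hskew.comulHom_group hg₁ hn hprim
  have hεx := hskew.counitHom_x hn
  have hεg := hskew.counitHom_group hn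
  refine ⟨(Coalgebra.comul, Coalgebra.counit, HopfAlgebra.antipode k),
    ⟨Bialgebra.comul_mul, Bialgebra.comul_one, Bialgebra.counit_mul, Bialgebra.counit_one,
      Coalgebra.coassoc, Coalgebra.rTensor_counit_comp_comul, Coalgebra.lTensor_counit_comp_comul,
      HopfAlgebra.mul_antipode_rTensor_comul, HopfAlgebra.mul_antipode_lTensor_comul,
      hΔx, hΔg, hεx, hεg, hskew.antipodeMap_x hg₁, hskew.antipodeMap_group hg₁⟩, ?_⟩
  rintro ⟨Δ, ε, S⟩ ⟨hΔ_mul, hΔ_one, hε_mul, hε_one, -, -, -, hS, -, hΔx', hΔg', hεx', hεg', -, -⟩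
  have hΔ : Δ = Coalgebra.comul := congrArg AlgHom.toLinearMap <|
    hskew.algHom_ext (φ := .ofLinearMap Δ hΔ_one hΔ_mul) (ψ := Bialgebra.comulAlgHom k B)
      (hΔx'.trans hΔx.symm) fun g => (hΔg' g).trans (hΔg g).symm
  have hε : ε = Coalgebra.counit := congrArg AlgHom.toLinearMap <|
    hskew.algHom_ext (φ := .ofLinearMap ε hε_one hε_mul) (ψ := Bialgebra.counitAlgHom k B)
      (hεx'.trans hεx.symm) fun g => (hεg' g).trans (hεg g).symm
  subst hΔ hε
  exact Prod.ext rfl (Prod.ext rfl (eq_antipode_of_mul'_map_id_right hS))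

/-- **Statement 3.**  There is a unique triple `(Δ, ε, S)` making the
`k`-algebra `B = A # kG` a Hopf algebra with the prescribed values of the
coproduct, counit and antipode on the generators `x` and `g ∈ G`. -/
theorem statement3
    (g₁ : G) (hg₁ : g₁ ∈ Subgroup.center G)
    (hprim : IsPrimitiveRoot ((χ g₁ : kˣ) : k) n)
    (hskew : IsSkewGroupAlgebra k G χ n σ B ιA ιG) :
    ∃! DES : (B →ₗ[k] B ⊗[k] B) × (B →ₗ[k] k) × (B →ₗ[k] B),
      -- `Δ` is an algebra homomorphism
      (∀ a b : B, DES.1 (a * b) = DES.1 a * DES.1 b) ∧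
      DES.1 1 = 1 ∧
      -- `ε` is an algebra homomorphism
      (∀ a b : B, DES.2.1 (a * b) = DES.2.1 a * DES.2.1 b) ∧
      DES.2.1 1 = 1 ∧
      -- coassociativity
      (TensorProduct.assoc k B B B).toLinearMap ∘ₗ
          LinearMap.rTensor B DES.1 ∘ₗ DES.1 =
        LinearMap.lTensor B DES.1 ∘ₗ DES.1 ∧
      -- counit laws
      LinearMap.rTensor B DES.2.1 ∘ₗ DES.1 = TensorProduct.mk k k B 1 ∧
      LinearMap.lTensor B DES.2.1 ∘ₗ DES.1 = (TensorProduct.mk k B k).flip 1 ∧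
      -- antipode laws
      LinearMap.mul' k B ∘ₗ TensorProduct.map DES.2.2 LinearMap.id ∘ₗ DES.1 =
        Algebra.linearMap k B ∘ₗ DES.2.1 ∧
      LinearMap.mul' k B ∘ₗ TensorProduct.map LinearMap.id DES.2.2 ∘ₗ DES.1 =
        Algebra.linearMap k B ∘ₗ DES.2.1 ∧
      -- prescribed values on the generators
      DES.1 (ιA (xA k n)) =
        ιA (xA k n) ⊗ₜ[k] 1 + ((ιG g₁ : Bˣ) : B) ⊗ₜ[k] ιA (xA k n) ∧
      (∀ g : G, DES.1 ((ιG g : Bˣ) : B) =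
        ((ιG g : Bˣ) : B) ⊗ₜ[k] ((ιG g : Bˣ) : B)) ∧
      DES.2.1 (ιA (xA k n)) = 0 ∧
      (∀ g : G, DES.2.1 ((ιG g : Bˣ) : B) = 1) ∧
      DES.2.2 (ιA (xA k n)) = -(((ιG g₁⁻¹ : Bˣ) : B) * ιA (xA k n)) ∧
      (∀ g : G, DES.2.2 ((ιG g : Bˣ) : B) = ((ιG g⁻¹ : Bˣ) : B)) := by
  exact statement3_general k G χ n σ B ιA ιG g₁ hg₁
    (ne_zero_of_isPrimitiveRoot_map ((Units.coeHom k).comp χ) hprim) hprim hskew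

end
end
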